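/- arXiv:2510.03429 — 3 statements merged into one kernel-verified Lean document; each statement's English description precedes it below -/
import Mathlib

section
/- Let k be a nontrivial commutative ring and n ≥ 2. Let L be the Leavitt algebra of module type (1, n) over k: the quotient of the free k-algebra on 2n generators x_1, …, x_n, y_1, …, y_n by the two-sided ideal generated by the Cuntz–Krieger relations y_i x_j − δ_{ij} (for all 1 ≤ i, j ≤ n) and (Σ_{i=1}^n x_i y_i) − 1. Then: (i) there is a left L-module isomorphism L ≃ₗ[L] (Fin n → L); and (ii) for every natural number l ≥ 1, if L ≃ₗ[L] (Fin l → L) as left L-modules, then n − 1 divides l − 1. In other words, the module type of L is (1, n). -/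
/-- The Cuntz–Krieger relations defining the Leavitt algebra of type `(1, n)`:
`y i * x j = δ_{ij}` and `∑ i, x i * y i = 1`, where `x i` are the images of the left
summand generators and `y i` those of the right summand generators. -/
inductive LeavittRel (k : Type*) [CommRing k] (n : ℕ) :
    FreeAlgebra k (Fin n ⊕ Fin n) → FreeAlgebra k (Fin n ⊕ Fin n) → Prop
  | ck1 (i j : Fin n) : LeavittRel k n
      (FreeAlgebra.ι k (Sum.inr i) * FreeAlgebra.ι k (Sum.inl j))
      (if i = j then 1 else 0)
  | ck2 : LeavittRel k n
      (∑ i : Fin n, FreeAlgebra.ι k (Sum.inl i) * FreeAlgebra.ι k (Sum.inr i)) 1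

/-!
Let `k` map to a field `F`. Appending letters to words makes `L` act on the span of the words in
`n` letters, up to operators of finite rank, and modulo finite rank this action commutes with
prepending letters. The row of the `n` prepending operators misses only the empty word, so it is
Fredholm of index `-1`. An isomorphism `L ≅ Lˡ` is given by an invertible row of `l` elements of
`L`, which acts as a Fredholm row of some index `d`. Composing the two rows in either order gives,
up to finite rank and a permutation of coordinates, the same operator, and additivity of the index
reads `d - l = -1 + n * d`, that is `(n - 1) * d = 1 - l`.
-/

open Module LinearMap
open scoped LinearMap.FiniteRangeSetoid

section Dimension

variable {F V W : Type*} [Field F] [AddCommGroup V] [Module F V] [AddCommGroup W] [Module F W]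

theorem finrank_map_add_finrank_inf_ker (f : V →ₗ[F] W) (S : Submodule F V) [Module.Finite F S] :
    finrank F (S.map f) + finrank F (S ⊓ ker f : Submodule F V) = finrank F S := by
  rw [← range_domRestrict, ← (f.domRestrict S).finrank_range_add_finrank_ker, ker_domRestrict,
    ← Submodule.map_comap_subtype, Submodule.finrank_map_subtype_eq]

theorem finrank_quotient_add_finrank_map_mkQ {p q : Submodule F V} (hpq : p ≤ q) [p.CoFG] :
    finrank F (V ⧸ q) + finrank F (q.map p.mkQ) = finrank F (V ⧸ p) := by
  rw [← (Submodule.quotientQuotientEquivQuotient p q hpq).finrank_eq,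
    Submodule.finrank_quotient_add_finrank]

theorem finrank_quotient_sup_add_finrank (p q : Submodule F V) [p.CoFG] [Module.Finite F q] :
    finrank F (V ⧸ (p ⊔ q)) + finrank F q =
      finrank F (V ⧸ p) + finrank F (p ⊓ q : Submodule F V) := by
  have image_dim := finrank_map_add_finrank_inf_ker p.mkQ q
  have quotient_dim := finrank_quotient_add_finrank_map_mkQ (le_sup_left : p ≤ p ⊔ q)
  rw [Submodule.ker_mkQ, inf_comm] at image_dim
  rw [Submodule.map_sup, Submodule.mkQ_map_self, bot_sup_eq] at quotient_dim
  lia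

end Dimension

section FiniteRankEquivalence

variable {R V W ι : Type*} [CommRing R] [AddCommGroup V] [Module R V] [AddCommGroup W] [Module R W]

theorem sum_equiv_sum {f g : ι → V →ₗ[R] W} (s : Finset ι) (h : ∀ i, f i ≈ g i) :
    ∑ i ∈ s, f i ≈ ∑ i ∈ s, g i := by
  rw [FiniteRangeSetoid.equiv_iff_hasNoetherianRange, ← Finset.sum_sub_distrib]
  exact (finiteRange R V W).sum_mem fun i _ =>
    FiniteRangeSetoid.equiv_iff_hasNoetherianRange.1 (h i)

theorem equiv_of_proj_comp_equiv [Finite ι] {f g : V →ₗ[R] (ι → W)}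
    (h : ∀ i, proj i ∘ₗ f ≈ proj i ∘ₗ g) : f ≈ g := by
  classical
  have := Fintype.ofFinite ι
  have decompose (u : V →ₗ[R] (ι → W)) : u = ∑ i, single R (fun _ => W) i ∘ₗ proj i ∘ₗ u := by
    ext v j
    simp [Finset.sum_apply, Pi.single_apply]
  rw [decompose f, decompose g]
  exact sum_equiv_sum _ fun i => FiniteRangeSetoid.equiv_comp_left (h i)

theorem compLeft_equiv_compLeft {f g : V →ₗ[R] W} (h : f ≈ g) (ι : Type*) [Finite ι] :
    f.compLeft ι ≈ g.compLeft ι :=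
  equiv_of_proj_comp_equiv fun i =>
    FiniteRangeSetoid.equiv_comp_right (u := proj (φ := fun _ : ι => V) i) h

end FiniteRankEquivalence

/-- Purely algebraic Fredholm operators between vector spaces: the linear maps that are invertible
modulo maps of finite rank. -/
def IsFredholm {F V W : Type*} [Field F] [AddCommGroup V] [Module F V] [AddCommGroup W]
    [Module F W] (f : V →ₗ[F] W) : Prop :=
  ∃ g : W →ₗ[F] V, g.IsQuasiInverse f

/-- The index `dim ker f - dim coker f` of a Fredholm operator; a junk value if `f` is not
Fredholm, as `finrank` is `0` on infinite-dimensional spaces. -/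
noncomputable def fredholmIndex {F V W : Type*} [Field F] [AddCommGroup V] [Module F V]
    [AddCommGroup W] [Module F W] (f : V →ₗ[F] W) : ℤ :=
  finrank F (ker f) - finrank F (W ⧸ range f)

section Fredholm

variable {F V W X : Type*} [Field F] [AddCommGroup V] [Module F V] [AddCommGroup W] [Module F W]
  [AddCommGroup X] [Module F X]

namespace IsFredholm

theorem finite_ker {f : V →ₗ[F] W} (hf : IsFredholm f) : Module.Finite F (ker f) := by
  obtain ⟨g, hgf, -⟩ := hf
  refine Module.Finite.iff_fg.2 ((FiniteRangeSetoid.equiv_iff_eqLocus_coFG.1 hgf).fg_of_disjoint ?_)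
  rw [Submodule.disjoint_def]
  intro v killed fixed
  calc
    v = g (f v) := fixed.symm
    _ = 0 := by rw [mem_ker.1 killed, map_zero]

theorem coFG_range {f : V →ₗ[F] W} (hf : IsFredholm f) : (range f).CoFG := by
  obtain ⟨g, -, hfg⟩ := hf
  exact (FiniteRangeSetoid.equiv_iff_eqLocus_coFG.1 hfg).of_le fun w fixed => ⟨g w, fixed⟩

theorem comp {g : W →ₗ[F] X} {f : V →ₗ[F] W} (hg : IsFredholm g) (hf : IsFredholm f) :
    IsFredholm (g ∘ₗ f) := by
  obtain ⟨g', hg'⟩ := hg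
  obtain ⟨f', hf'⟩ := hf
  exact ⟨f' ∘ₗ g', hf'.comp hg'⟩

theorem compLeft {f : V →ₗ[F] W} (hf : IsFredholm f) (ι : Type*) [Finite ι] :
    IsFredholm (f.compLeft ι) := by
  obtain ⟨g, hgf, hfg⟩ := hf
  exact ⟨g.compLeft ι, compLeft_equiv_compLeft hgf ι, compLeft_equiv_compLeft hfg ι⟩

theorem congr {f g : V →ₗ[F] W} (hf : IsFredholm f) (h : f ≈ g) : IsFredholm g := by
  obtain ⟨f', hf'⟩ := hf
  exact ⟨f', hf'.congr (Setoid.refl _) (Setoid.symm h)⟩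

theorem of_linearEquiv (e : V ≃ₗ[F] W) : IsFredholm (e : V →ₗ[F] W) :=
  ⟨e.symm, e.isQuasiInverse⟩

theorem subtype {U : Submodule F V} (hU : U.CoFG) : IsFredholm U.subtype := by
  obtain ⟨T, hUT⟩ := U.exists_isCompl
  have : Module.Finite F T := Module.Finite.iff_fg.2 (hU.fg_of_isCompl hUT)
  exact ⟨U.projectionOnto T hUT, (isQuasiInverse_subtype_projectionOnto hUT).symm⟩

end IsFredholm

theorem finrank_ker_comp (g : W →ₗ[F] X) (f : V →ₗ[F] W) [Module.Finite F (ker (g ∘ₗ f))] :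
    finrank F (ker (g ∘ₗ f)) = finrank F (range f ⊓ ker g : Submodule F W) + finrank F (ker f) := by
  rw [← finrank_map_add_finrank_inf_ker f, inf_eq_right.2 (ker_le_ker_comp f g), ker_comp,
    Submodule.map_comap_eq]

theorem finrank_quotient_range_comp (g : W →ₗ[F] X) (f : V →ₗ[F] W) [(range (g ∘ₗ f)).CoFG] :
    finrank F (X ⧸ range (g ∘ₗ f)) =
      finrank F (X ⧸ range g) + finrank F (W ⧸ (range f ⊔ ker g)) := by
  have ker_eq : ker ((range (g ∘ₗ f)).mkQ ∘ₗ g) = range f ⊔ ker g := by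
    rw [ker_comp, Submodule.ker_mkQ, range_comp, Submodule.comap_map_eq]
  rw [← finrank_quotient_add_finrank_map_mkQ (range_comp_le_range f g), ← range_comp,
    ← ker_eq, (quotKerEquivRange _).finrank_eq]

theorem fredholmIndex_linearEquiv (e : V ≃ₗ[F] W) : fredholmIndex (e : V →ₗ[F] W) = 0 := by
  have := Submodule.Quotient.subsingleton_iff.2 (LinearEquiv.range e)
  rw [fredholmIndex, LinearEquiv.ker, finrank_bot, finrank_zero_of_subsingleton, sub_self]

theorem fredholmIndex_of_comp_eq_id {f : V →ₗ[F] W} {g : W →ₗ[F] V} (hgf : g ∘ₗ f = .id) :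
    fredholmIndex f = -finrank F (ker g) := by
  have left_inv : Function.LeftInverse g f := LinearMap.congr_fun hgf
  have ker_eq_bot : ker f = ⊥ := ker_eq_bot.2 left_inv.injective
  have compl : IsCompl (range (f ∘ₗ g)) (ker (f ∘ₗ g)) :=
    IsIdempotentElem.isCompl (LinearMap.ext fun w => congr_arg f (left_inv (g w)))
  rw [range_comp_of_range_eq_top f (range_eq_top.2 left_inv.surjective),
    ker_comp_of_ker_eq_bot g ker_eq_bot] at compl
  rw [fredholmIndex, ker_eq_bot, finrank_bot,
    (Submodule.quotientEquivOfIsCompl _ _ compl).finrank_eq, Nat.cast_zero, zero_sub]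

namespace IsFredholm

theorem fredholmIndex_comp {g : W →ₗ[F] X} {f : V →ₗ[F] W} (hg : IsFredholm g)
    (hf : IsFredholm f) : fredholmIndex (g ∘ₗ f) = fredholmIndex g + fredholmIndex f := by
  have := hf.coFG_range
  have := hg.finite_ker
  have := (hg.comp hf).finite_ker
  have := (hg.comp hf).coFG_range
  have relative_dim := finrank_quotient_sup_add_finrank (range f) (ker g)
  rw [fredholmIndex, fredholmIndex, fredholmIndex, finrank_ker_comp, finrank_quotient_range_comp]
  lia

theorem fredholmIndex_compLeft {f : V →ₗ[F] W} (hf : IsFredholm f) (ι : Type*) [Fintype ι] :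
    fredholmIndex (f.compLeft ι) = Fintype.card ι * fredholmIndex f := by
  classical
  have := hf.finite_ker
  have := hf.coFG_range
  have ker_dim : finrank F (ker (f.compLeft ι)) = Fintype.card ι * finrank F (ker f) := by
    rw [ker_compLeft, ← (ker f).range_subtype, ← range_compLeft,
      finrank_range_of_inj (by exact (ker f).injective_subtype.comp_left), finrank_pi_fintype,
      Submodule.range_subtype, Finset.sum_const, Finset.card_univ, smul_eq_mul]
  have coker_dim : finrank F ((ι → W) ⧸ range (f.compLeft ι)) =
      Fintype.card ι * finrank F (W ⧸ range f) := by
    rw [range_compLeft, (Submodule.quotientPi _).finrank_eq, finrank_pi_fintype, Finset.sum_const,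
      Finset.card_univ, smul_eq_mul]
  rw [fredholmIndex, fredholmIndex, ker_dim, coker_dim, Nat.cast_mul, Nat.cast_mul, mul_sub]

theorem fredholmIndex_congr {f g : V →ₗ[F] W} (hf : IsFredholm f) (h : f ≈ g) :
    fredholmIndex f = fredholmIndex g := by
  have fredholm_subtype := IsFredholm.subtype (FiniteRangeSetoid.equiv_iff_eqLocus_coFG.1 h)
  have comp_eq : f ∘ₗ (eqLocus f g).subtype = g ∘ₗ (eqLocus f g).subtype := by
    ext v
    exact v.2
  have index_eq := hf.fredholmIndex_comp fredholm_subtype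
  rw [comp_eq, (hf.congr h).fredholmIndex_comp fredholm_subtype] at index_eq
  exact (add_right_cancel index_eq).symm

end IsFredholm

end Fredholm

section RowMap

/-- Exchange of the two indices of a doubly indexed family, as a linear equivalence. -/
def piSwap (R V ι κ : Type*) [Semiring R] [AddCommMonoid V] [Module R V] :
    (κ → ι → V) ≃ₗ[R] (ι → κ → V) where
  toEquiv := Equiv.piComm _
  map_add' _ _ := rfl
  map_smul' _ _ := rfl

/-- The row `(T i)ᵢ` of operators on `V`, acting on column vectors: `v ↦ ∑ i, T i (v i)`. -/
def rowMap {R V ι : Type*} [Semiring R] [AddCommMonoid V] [Module R V] [Fintype ι]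
    (T : ι → Module.End R V) : (ι → V) →ₗ[R] V :=
  ∑ i, T i ∘ₗ proj i

section Semiring

variable {R V ι : Type*} [Semiring R] [AddCommMonoid V] [Module R V] [Fintype ι]

theorem rowMap_apply (T : ι → Module.End R V) (v : ι → V) : rowMap T v = ∑ i, T i (v i) := by
  simp only [rowMap, LinearMap.sum_apply, comp_apply, proj_apply]

theorem rowMap_comp_pi (T S : ι → Module.End R V) : rowMap T ∘ₗ pi S = ∑ i, T i * S i := by
  ext v
  simp only [comp_apply, rowMap_apply, pi_apply, LinearMap.sum_apply, Module.End.mul_apply]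

theorem comp_rowMap (S : Module.End R V) (T : ι → Module.End R V) :
    S ∘ₗ rowMap T = rowMap fun i => S * T i := by
  ext v
  simp only [comp_apply, rowMap_apply, map_sum, Module.End.mul_apply]

theorem rowMap_ite_eq_proj [DecidableEq ι] (i : ι) :
    rowMap (fun j => if i = j then (1 : Module.End R V) else 0) = proj i := by
  refine LinearMap.ext fun v => ?_
  have entry (j : ι) : (if i = j then (1 : Module.End R V) else 0) (v j) =
      if i = j then v j else 0 := by
    split_ifs <;> rfl
  simp only [rowMap_apply, entry, Finset.sum_ite_eq, Finset.mem_univ, if_true, proj_apply]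

end Semiring

section CommRing

variable {R V ι κ : Type*} [CommRing R] [AddCommGroup V] [Module R V] [Fintype ι] [Fintype κ]

theorem rowMap_equiv_rowMap {T T' : ι → Module.End R V} (h : ∀ i, T i ≈ T' i) :
    rowMap T ≈ rowMap T' :=
  sum_equiv_sum _ fun i => FiniteRangeSetoid.equiv_comp_right (h i)

theorem rowMap_comp_compLeft_equiv {X : ι → Module.End R V} {A : κ → Module.End R V}
    (comm : ∀ i j, A j * X i ≈ X i * A j) :
    rowMap A ∘ₗ (rowMap X).compLeft κ ≈
      rowMap X ∘ₗ (rowMap A).compLeft ι ∘ₗ (piSwap R V ι κ : (κ → ι → V) →ₗ[R] (ι → κ → V)) := by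
  calc
    _ = ∑ j, rowMap (fun i => A j * X i) ∘ₗ proj j := by
      ext v
      simp [rowMap_apply]
    _ ≈ ∑ j, rowMap (fun i => X i * A j) ∘ₗ proj j :=
      sum_equiv_sum _ fun j =>
        FiniteRangeSetoid.equiv_comp_right (rowMap_equiv_rowMap fun i => comm i j)
    _ = _ := by
      ext v
      simpa [rowMap_apply, piSwap] using Finset.sum_comm

end CommRing

theorem card_sub_one_mul_fredholmIndex_rowMap {F V ι κ : Type*} [Field F] [AddCommGroup V]
    [Module F V] [Fintype ι] [Fintype κ]
    {X : ι → Module.End F V} {A : κ → Module.End F V} (hX : IsFredholm (rowMap X))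
    (hA : IsFredholm (rowMap A)) (comm : ∀ i j, A j * X i ≈ X i * A j) :
    (Fintype.card ι - 1 : ℤ) * fredholmIndex (rowMap A) =
      (Fintype.card κ - 1) * fredholmIndex (rowMap X) := by
  have swap := IsFredholm.of_linearEquiv (piSwap F V ι κ)
  have index_eq := (hA.comp (hX.compLeft κ)).fredholmIndex_congr
    (rowMap_comp_compLeft_equiv comm)
  rw [hA.fredholmIndex_comp (hX.compLeft κ), hX.fredholmIndex_compLeft,
    hX.fredholmIndex_comp ((hA.compLeft ι).comp swap), (hA.compLeft ι).fredholmIndex_comp swap,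
    hA.fredholmIndex_compLeft, fredholmIndex_linearEquiv] at index_eq
  linear_combination -index_eq

end RowMap

/-- Elements `x i`, `y i` of a semiring subject to the Cuntz–Krieger relations, so that the row `x`
is invertible with inverse the column `y`. -/
structure IsLeavittFamily {A ι : Type*} [Semiring A] [Fintype ι] [DecidableEq ι]
    (x y : ι → A) : Prop where
  mul_eq_ite : ∀ i j, y i * x j = if i = j then 1 else 0
  sum_mul : ∑ i, x i * y i = 1

section LeavittFamily

variable {A B ι : Type*} [Semiring A] [Semiring B] [Fintype ι] [DecidableEq ι]

namespace IsLeavittFamily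

variable {x y : ι → A}

theorem map (h : IsLeavittFamily x y) (φ : A →+* B) : IsLeavittFamily (φ ∘ x) (φ ∘ y) where
  mul_eq_ite i j := by
    rw [Function.comp_apply, Function.comp_apply, ← map_mul, h.mul_eq_ite, apply_ite φ, map_one,
      map_zero]
  sum_mul := by
    simp only [Function.comp_apply, ← map_mul, ← map_sum, h.sum_mul, map_one]

theorem commute_right (h : IsLeavittFamily x y) {c : A} (hc : ∀ i, Commute c (x i)) (i : ι) :
    Commute c (y i) := by
  symm
  calc
    y i * c = y i * c * ∑ j, x j * y j := by rw [h.sum_mul, mul_one]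
    _ = ∑ j, y i * x j * (c * y j) := by
      rw [Finset.mul_sum]
      refine Finset.sum_congr rfl fun j _ => ?_
      rw [mul_assoc, ← mul_assoc c, (hc j).eq, mul_assoc, mul_assoc]
    _ = c * y i := by
      simp only [h.mul_eq_ite, ite_mul, one_mul, zero_mul, Finset.sum_ite_eq, Finset.mem_univ,
        if_true]

/-- Row multiplication by `x`; its inverse is column multiplication by `y`. -/
def linearEquiv (h : IsLeavittFamily x y) : A ≃ₗ[A] (ι → A) where
  toFun a i := a * x i
  map_add' a b := funext fun i => add_mul a b (x i)
  map_smul' c a := funext fun i => mul_assoc c a (x i)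
  invFun v := ∑ i, v i * y i
  left_inv a := by simp only [mul_assoc, ← Finset.mul_sum, h.sum_mul, mul_one]
  right_inv v := by
    funext j
    simp only [Finset.sum_mul, mul_assoc, h.mul_eq_ite, mul_ite, mul_one, mul_zero,
      Finset.sum_ite_eq', Finset.mem_univ, if_true]

end IsLeavittFamily

theorem IsLeavittFamily.of_linearEquiv (e : A ≃ₗ[A] (ι → A)) :
    IsLeavittFamily (e 1) fun i => e.symm (Pi.single i 1) := by
  have mul_one_eq (a : A) (j : ι) : a * e 1 j = e a j := by
    rw [← smul_eq_mul, ← Pi.smul_apply, ← map_smul, smul_eq_mul, mul_one]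
  constructor
  · intro i j
    rw [mul_one_eq, e.apply_symm_apply, Pi.single_apply]
    simp only [eq_comm]
  · simp only [← smul_eq_mul, ← map_smul, ← map_sum]
    rw [← e.symm_apply_apply 1]
    congr 1
    funext j
    simp [Pi.single_apply]

end LeavittFamily

/-- The congruence on the ring of endomorphisms of `V` that identifies two operators whose
difference has finite rank. -/
def finiteRankCon (F V : Type*) [Field F] [AddCommGroup V] [Module F V] :
    RingCon (Module.End F V) where
  toSetoid := FiniteRangeSetoid.setoid
  mul' := fun hu hv => FiniteRangeSetoid.equiv_comp hv hu
  add' := fun hu hv => by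
    refine FiniteRangeSetoid.equiv_iff_hasNoetherianRange.2 ?_
    rw [add_sub_add_comm]
    exact (FiniteRangeSetoid.equiv_iff_hasNoetherianRange.1 hu).add
      (FiniteRangeSetoid.equiv_iff_hasNoetherianRange.1 hv)

/-- The algebraic Calkin algebra of `V`: endomorphisms modulo those of finite rank. -/
abbrev Calkin (F V : Type*) [Field F] [AddCommGroup V] [Module F V] : Type _ :=
  (finiteRankCon F V).Quotient

namespace Calkin

variable {F V : Type*} [Field F] [AddCommGroup V] [Module F V]

/-- The projection of the endomorphism ring onto the Calkin algebra. -/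
def mk : Module.End F V →+* Calkin F V :=
  (finiteRankCon F V).mk'

theorem mk_surjective : Function.Surjective (mk : Module.End F V →+* Calkin F V) :=
  RingCon.mk'_surjective _

theorem mk_eq_mk_iff {u v : Module.End F V} : mk u = mk v ↔ u ≈ v :=
  RingCon.eq _

end Calkin

theorem IsLeavittFamily.isFredholm_rowMap {F V ι : Type*} [Field F] [AddCommGroup V] [Module F V]
    [Fintype ι] [DecidableEq ι] {T S : ι → Module.End F V}
    (h : IsLeavittFamily (Calkin.mk ∘ T) (Calkin.mk ∘ S)) : IsFredholm (rowMap T) := by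
  refine ⟨pi S, equiv_of_proj_comp_equiv fun i => ?_, ?_⟩
  · have entries (j : ι) : S i * T j ≈ if i = j then 1 else 0 := by
      rw [← Calkin.mk_eq_mk_iff, map_mul, apply_ite Calkin.mk, map_one, map_zero]
      exact h.mul_eq_ite i j
    calc
      proj i ∘ₗ pi S ∘ₗ rowMap T = rowMap fun j => S i * T j := comp_rowMap (S i) T
      _ ≈ rowMap fun j => if i = j then 1 else 0 := rowMap_equiv_rowMap entries
      _ = proj i := rowMap_ite_eq_proj i
  · rw [IsRightQuasiInverse, rowMap_comp_pi]
    refine Calkin.mk_eq_mk_iff.1 ?_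
    simp only [map_sum, map_mul]
    exact h.sum_mul

section Shift

/-- For a family `p` of self-maps of `W` (such as prepending a letter to a word), the operator on
formal combinations of elements of `W` induced by `p i`. -/
noncomputable def shift (R : Type*) [Semiring R] {W ι : Type*} (p : ι → W → W) (i : ι) :
    Module.End R (W →₀ R) :=
  Finsupp.lmapDomain R R (p i)

/-- The operator undoing `shift R p i` and killing the basis vectors outside the range of `p i`. -/
noncomputable def unshift (R : Type*) [Semiring R] {W ι : Type*} {p : ι → W → W}
    (hp : Function.Injective p.uncurry) (i : ι) : Module.End R (W →₀ R) :=
  Finsupp.lcomapDomain (p i) (hp.comp (Prod.mk_right_injective i))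

section Semiring

variable {R W ι : Type*} [Semiring R] {p : ι → W → W}

theorem shift_single (p : ι → W → W) (i : ι) (w : W) (c : R) :
    shift R p i (Finsupp.single w c) = Finsupp.single (p i w) c :=
  Finsupp.mapDomain_single

theorem commute_shift {κ : Type*} {q : κ → W → W} {i : ι} {j : κ}
    (h : Function.Commute (p i) (q j)) : Commute (shift R p i) (shift R q j) := by
  refine Finsupp.lhom_ext fun w c => ?_
  simp only [Module.End.mul_apply, shift_single, h w]

theorem unshift_apply (hp : Function.Injective p.uncurry) (i : ι) (v : W →₀ R) (w : W) :
    unshift R hp i v w = v (p i w) :=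
  rfl

theorem ker_pi_unshift (hp : Function.Injective p.uncurry) :
    ker (pi (unshift R hp)) = Finsupp.supported R R (Set.range p.uncurry)ᶜ := by
  ext v
  simp only [mem_ker, Finsupp.mem_supported', funext_iff, pi_apply, Finsupp.ext_iff, unshift_apply,
    Set.notMem_compl_iff, Set.forall_mem_range, Prod.forall, Function.uncurry_apply_pair]
  rfl

theorem unshift_mul_shift [DecidableEq ι] (hp : Function.Injective p.uncurry) (i j : ι) :
    unshift R hp i * shift R p j = if i = j then 1 else 0 := by
  refine Finsupp.lhom_ext fun w c => Finsupp.ext fun w' => ?_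
  have inj : p j w = p i w' ↔ i = j ∧ w = w' := by
    rw [← Function.uncurry_apply_pair p, ← Function.uncurry_apply_pair p, hp.eq_iff, Prod.mk_inj,
      eq_comm (a := j)]
  classical
  rw [Module.End.mul_apply, unshift_apply, shift_single, Finsupp.single_apply]
  split_ifs <;> simp_all

end Semiring

variable {F W ι : Type*} [Field F] [Fintype ι] {p : ι → W → W}

theorem sum_shift_mul_unshift_equiv_one (hp : Function.Injective p.uncurry)
    (hfin : (Set.range p.uncurry)ᶜ.Finite) : ∑ i, shift F p i * unshift F hp i ≈ 1 := by
  classical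
  have coFG : (Finsupp.supported F F (Set.range p.uncurry)).CoFG := by
    have : Finite ((Set.range p.uncurry)ᶜ : Set W) := hfin
    have compl_fg : (Finsupp.supported F F (Set.range p.uncurry)ᶜ).FG :=
      Module.Finite.iff_fg.1 (.equiv (Finsupp.supportedEquivFinsupp _).symm)
    refine compl_fg.cofg_of_codisjoint (codisjoint_iff.2 ?_)
    rw [← Finsupp.supported_union, Set.compl_union_self, Finsupp.supported_univ]
  refine FiniteRangeSetoid.equiv_of_eqOn_coFG coFG ?_
  rw [Finsupp.supported_eq_span_single]
  refine LinearMap.eqOn_span ?_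
  rintro _ ⟨_, ⟨⟨j, w⟩, rfl⟩, rfl⟩
  have unshift_single (i : ι) : unshift F hp i (Finsupp.single (p j w) 1) =
      if i = j then Finsupp.single w 1 else 0 := by
    rw [← shift_single, ← Module.End.mul_apply, unshift_mul_shift]
    split_ifs <;> simp
  simp [LinearMap.sum_apply, unshift_single, apply_ite, shift_single]

theorem isLeavittFamily_shift [DecidableEq ι] (hp : Function.Injective p.uncurry)
    (hfin : (Set.range p.uncurry)ᶜ.Finite) :
    IsLeavittFamily (Calkin.mk ∘ shift F p) (Calkin.mk ∘ unshift F hp) where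
  mul_eq_ite i j := by
    rw [Function.comp_apply, Function.comp_apply, ← map_mul, unshift_mul_shift,
      apply_ite Calkin.mk, map_one, map_zero]
  sum_mul := by
    simp only [Function.comp_apply, ← map_mul, ← map_sum]
    rw [← map_one Calkin.mk]
    exact Calkin.mk_eq_mk_iff.2 (sum_shift_mul_unshift_equiv_one hp hfin)

theorem fredholmIndex_rowMap_shift (hp : Function.Injective p.uncurry) :
    fredholmIndex (rowMap (shift F p)) = -((Set.range p.uncurry)ᶜ.ncard : ℤ) := by
  classical
  have left_inv : pi (unshift F hp) ∘ₗ rowMap (shift F p) = .id := by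
    refine LinearMap.ext fun v => funext fun i => ?_
    calc
      unshift F hp i (rowMap (shift F p) v) = rowMap (fun j => unshift F hp i * shift F p j) v :=
        LinearMap.congr_fun (comp_rowMap (unshift F hp i) (shift F p)) v
      _ = v i := by simp only [unshift_mul_shift, rowMap_ite_eq_proj, proj_apply]
  rw [fredholmIndex_of_comp_eq_id left_inv, ker_pi_unshift,
    (Finsupp.supportedEquivFinsupp _).finrank_eq,
    finrank_eq_nat_card_basis Finsupp.basisSingleOne, Nat.card_coe_set_eq]

end Shift

section Words

variable {α : Type*}

theorem injective_uncurry_cons : Function.Injective (List.cons : α → List α → List α).uncurry := by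
  rintro ⟨a, w⟩ ⟨b, w'⟩ h
  simpa using h

theorem compl_range_uncurry_cons :
    (Set.range (List.cons : α → List α → List α).uncurry)ᶜ = {[]} := by
  ext w
  cases w <;> simp

theorem injective_uncurry_concat :
    Function.Injective (fun (a : α) (w : List α) => w ++ [a]).uncurry := by
  rintro ⟨a, w⟩ ⟨b, w'⟩ h
  simpa [and_comm] using h

theorem compl_range_uncurry_concat :
    (Set.range (fun (a : α) (w : List α) => w ++ [a]).uncurry)ᶜ = {[]} := by
  ext w
  induction w using List.reverseRecOn <;> simp

theorem IsLeavittFamily.card_sub_one_dvd_of_commute_shift_cons {F κ : Type*} [Field F] [Fintype α]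
    [Fintype κ] [DecidableEq κ] {c d : κ → Calkin F (List α →₀ F)} (h : IsLeavittFamily c d)
    (comm : ∀ i j, Commute (Calkin.mk (shift F List.cons i)) (c j)) :
    (Fintype.card α - 1 : ℤ) ∣ Fintype.card κ - 1 := by
  classical
  obtain ⟨A, rfl⟩ : ∃ A, Calkin.mk ∘ A = c := Calkin.mk_surjective.comp_left c
  obtain ⟨B, rfl⟩ : ∃ B, Calkin.mk ∘ B = d := Calkin.mk_surjective.comp_left d
  have prepend := isLeavittFamily_shift (F := F) (injective_uncurry_cons (α := α))
    (compl_range_uncurry_cons ▸ Set.finite_singleton _)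
  have comm_mod_finite_rank (i : α) (j : κ) :
      A j * shift F List.cons i ≈ shift F List.cons i * A j := by
    rw [← Calkin.mk_eq_mk_iff, map_mul, map_mul]
    exact (comm i j).eq.symm
  have index_eq := card_sub_one_mul_fredholmIndex_rowMap prepend.isFredholm_rowMap
    h.isFredholm_rowMap comm_mod_finite_rank
  rw [fredholmIndex_rowMap_shift injective_uncurry_cons, compl_range_uncurry_cons,
    Set.ncard_singleton, Nat.cast_one, mul_neg_one] at index_eq
  exact ⟨-fredholmIndex (rowMap A), by rw [mul_neg, index_eq, neg_neg]⟩

end Words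

/-- The Leavitt algebra of module type `(1, n)`. -/
abbrev LeavittAlgebra (k : Type*) [CommRing k] (n : ℕ) : Type _ :=
  RingQuot (LeavittRel k n)

namespace LeavittAlgebra

variable (k : Type*) [CommRing k] {n : ℕ}

/-- The generators of the Leavitt algebra that form its invertible row. -/
def x (i : Fin n) : LeavittAlgebra k n :=
  RingQuot.mkAlgHom k (LeavittRel k n) (FreeAlgebra.ι k (Sum.inl i))

/-- The generators of the Leavitt algebra that form the column inverse to the row of the `x i`. -/
def y (i : Fin n) : LeavittAlgebra k n :=
  RingQuot.mkAlgHom k (LeavittRel k n) (FreeAlgebra.ι k (Sum.inr i))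

theorem isLeavittFamily : IsLeavittFamily (x k (n := n)) (y k) where
  mul_eq_ite i j := by
    rw [y, x, ← map_mul, RingQuot.mkAlgHom_rel k (LeavittRel.ck1 i j),
      apply_ite (RingQuot.mkAlgHom k _), map_one, map_zero]
  sum_mul := by
    simp only [x, y, ← map_mul, ← map_sum]
    rw [RingQuot.mkAlgHom_rel k LeavittRel.ck2, map_one]

theorem adjoin_generators_eq_top :
    Algebra.adjoin k (Set.range (x k (n := n)) ∪ Set.range (y k)) = ⊤ := by
  have range_eq : Set.range (x k (n := n)) ∪ Set.range (y k) =
      RingQuot.mkAlgHom k (LeavittRel k n) '' Set.range (FreeAlgebra.ι k) := by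
    rw [← Set.range_comp, ← Set.Sum.elim_range]
    congr 1
    funext i
    cases i <;> rfl
  rw [range_eq, ← AlgHom.map_adjoin, FreeAlgebra.adjoin_range_ι, Algebra.map_top,
    AlgHom.range_eq_top]
  exact RingQuot.mkAlgHom_surjective k _

variable {k} {A : Type*} [Semiring A] [Algebra k A]

/-- The universal property of the Leavitt algebra. -/
def lift {u v : Fin n → A} (h : IsLeavittFamily u v) : LeavittAlgebra k n →ₐ[k] A :=
  RingQuot.liftAlgHom k ⟨FreeAlgebra.lift k (Sum.elim u v), fun _ _ rel => by
    cases rel with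
    | ck1 i j =>
      simp only [map_mul, FreeAlgebra.lift_ι_apply, Sum.elim_inl, Sum.elim_inr, h.mul_eq_ite]
      split_ifs <;> simp only [map_one, map_zero]
    | ck2 =>
      simp only [map_sum, map_mul, FreeAlgebra.lift_ι_apply, Sum.elim_inl, Sum.elim_inr,
        h.sum_mul, map_one]⟩

theorem lift_x {u v : Fin n → A} (h : IsLeavittFamily u v) (i : Fin n) : lift h (x k i) = u i := by
  rw [lift, x, RingQuot.liftAlgHom_mkAlgHom_apply, FreeAlgebra.lift_ι_apply, Sum.elim_inl]

theorem lift_y {u v : Fin n → A} (h : IsLeavittFamily u v) (i : Fin n) : lift h (y k i) = v i := by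
  rw [lift, y, RingQuot.liftAlgHom_mkAlgHom_apply, FreeAlgebra.lift_ι_apply, Sum.elim_inr]

theorem commute_lift {u v : Fin n → A} (h : IsLeavittFamily u v) {c : A}
    (hc : ∀ i, Commute c (u i)) (a : LeavittAlgebra k n) : Commute c (lift h a) := by
  have generators : Set.range (x k (n := n)) ∪ Set.range (y k) ⊆
      (Subalgebra.centralizer k {c}).comap (lift h) := by
    rintro _ (⟨i, rfl⟩ | ⟨i, rfl⟩) <;> rintro _ rfl
    · exact lift_x (k := k) h i ▸ hc i
    · exact lift_y (k := k) h i ▸ h.commute_right hc i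
  have mem := Algebra.adjoin_le generators
    (adjoin_generators_eq_top k ▸ Algebra.mem_top : a ∈ Algebra.adjoin k _)
  exact mem c rfl

theorem sub_one_dvd_card_sub_one_of_field (F : Type*) {κ : Type*} [Field F] [Algebra k F]
    [Fintype κ] [DecidableEq κ] {a b : κ → LeavittAlgebra k n} (h : IsLeavittFamily a b) :
    (n - 1 : ℤ) ∣ Fintype.card κ - 1 := by
  have append := isLeavittFamily_shift (F := F) (injective_uncurry_concat (α := Fin n))
    (compl_range_uncurry_concat ▸ Set.finite_singleton _)
  have prepend_comm_append (i j : Fin n) :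
      Commute (shift F List.cons i) (shift F (fun j w => w ++ [j]) j) :=
    commute_shift fun _ => rfl
  have dvd := (h.map (lift append).toRingHom).card_sub_one_dvd_of_commute_shift_cons fun i j =>
    commute_lift append (fun j' => (prepend_comm_append i j').map Calkin.mk) (a j)
  rwa [Fintype.card_fin] at dvd

theorem sub_one_dvd_card_sub_one [Nontrivial k] {κ : Type*} [Fintype κ] [DecidableEq κ]
    {a b : κ → LeavittAlgebra k n} (h : IsLeavittFamily a b) :
    (n - 1 : ℤ) ∣ Fintype.card κ - 1 := by
  obtain ⟨m, hm⟩ := Ideal.exists_maximal k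
  let _ := Ideal.Quotient.field m
  exact sub_one_dvd_card_sub_one_of_field (k ⧸ m) h

end LeavittAlgebra

/-- The Leavitt algebra `L` over a nontrivial commutative ring `k`, with `n ≥ 2`, the quotient
of the free algebra on `2n` generators by the Cuntz–Krieger relations, has module type `(1, n)`:
`L ≅ Lⁿ` as left `L`-modules, and whenever `L ≅ Lˡ` (with `l ≥ 1`) one has `n - 1 ∣ l - 1`. -/
theorem stmt5 (k : Type*) [CommRing k] [Nontrivial k] (n : ℕ) (hn : 2 ≤ n) :
    Nonempty (RingQuot (LeavittRel k n) ≃ₗ[RingQuot (LeavittRel k n)]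
        (Fin n → RingQuot (LeavittRel k n))) ∧
      ∀ l : ℕ, 1 ≤ l →
        Nonempty (RingQuot (LeavittRel k n) ≃ₗ[RingQuot (LeavittRel k n)]
          (Fin l → RingQuot (LeavittRel k n))) →
        (n - 1) ∣ (l - 1) := by
  refine ⟨⟨(LeavittAlgebra.isLeavittFamily k).linearEquiv⟩, fun l hl ⟨e⟩ => ?_⟩
  have dvd := LeavittAlgebra.sub_one_dvd_card_sub_one (IsLeavittFamily.of_linearEquiv e)
  rw [Fintype.card_fin] at dvd
  zify [hl, show 1 ≤ n by lia]
  exact dvd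
end

section
/- Let S be a division ring, n ≥ 1, and R = MonoidAlgebra S (FreeMonoid (Fin n)) the free S-algebra on x_1, …, x_n (the elements of S commuting with the x_i). Let ε : R → S be the augmentation sending every x_i to 0, and I = ker ε (the two-sided ideal generated by x_1, …, x_n). For a left R-module M, the following are equivalent: (1) M is a Sato module, i.e., M is finitely presented (there is an exact sequence R^p → R^q → M → 0 of left R-modules with p, q finite) and the map (Fin n → M) → M, (m_1, …, m_n) ↦ Σ_{i=1}^n x_i • m_i, is bijective; (2) there exist l : ℕ and a matrix Q : Matrix (Fin l) (Fin l) R with every entry in I such that M is isomorphic, as a left R-module, to the cokernel of the left R-linear endomorphism of R^l = (Fin l → R) given by right multiplication by the matrix 1 + Q, i.e., v ↦ (j ↦ Σ_i v_i · (1 + Q)_{ij}). -/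
/-- The value of the monoid homomorphism sending every free-monoid generator to `0`
is either `1` (on the empty word) or `0`. -/
theorem freeMonoidLiftZero_eq (S : Type*) [Semiring S] (n : ℕ)
    (y : FreeMonoid (Fin n)) :
    (FreeMonoid.lift fun _ => (0 : S)) y = 0 ∨ (FreeMonoid.lift fun _ => (0 : S)) y = 1 := by
  induction y using FreeMonoid.inductionOn with
  | one => right; simp
  | of x => left; simp
  | mul a b iha ihb =>
      rw [map_mul]
      rcases iha with h | h <;> rcases ihb with h' | h' <;> simp [h, h']

/-- The augmentation of the free algebra `R = S⟨x_1, …, x_n⟩`: the ring homomorphism to `S`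
sending each `x i` to `0` and restricting to the identity on `S`. -/
noncomputable def freeAlgAug (S : Type*) [Semiring S] (n : ℕ) :
    MonoidAlgebra S (FreeMonoid (Fin n)) →+* S :=
  MonoidAlgebra.liftNCRingHom (RingHom.id S)
    (FreeMonoid.lift fun _ => (0 : S))
    (fun x y => by
      rcases freeMonoidLiftZero_eq S n y with h | h <;>
        simp [Commute, SemiconjBy, h])

/-!
Let `F` be a finite free module. If the entries of `Q` lie in the augmentation ideal, every `v` is
congruent to `v (1 + Q)` modulo `∑ x_i F`. As `(v_i) ↦ ∑ x_i v_i` is injective on `F`, it follows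
that the analogous map on the cokernel of `1 + Q` is bijective.

Conversely, let `M` be finitely generated with `(m_i) ↦ ∑ x_i m_i` bijective. The words of bounded
length applied to a finite generating set span finite-dimensional spaces that exhaust `M`, so one
of these spaces, say `V`, satisfies `V ⊆ ∑ x_i V`. A basis `e` of `V` then satisfies
`e = ∑ x_i D_i e` with matrices `D_i` over `S`. In the module presented by these relations, the span
of the generators also lies in its own `∑ x_i`-image, so every element is `∑ w u_w` over words `w`
of one common length, with `u_w` in that span. If the element dies in `M`, uniqueness of
`x_i`-expansions kills every `u_w` there, hence kills `u_w` itself because `e` is independent.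
-/

section SumImage

variable {S M N ι : Type*} [Semiring S] [AddCommMonoid M] [Module S M] [AddCommMonoid N]
  [Module S N]

/-- The submodule `∑ i, x i V` generated by the images of `V` under a family `x` of
endomorphisms. A submodule `V` with `V ≤ sumImage x V` plays the role of a lattice: every element
of `V` can be expanded in the `x i` with coefficients in `V`. -/
def sumImage (x : ι → Module.End S M) (V : Submodule S M) : Submodule S M :=
  ⨆ i, V.map (x i)

/-- The sum of the images of `W` under all products of at most `d` of the endomorphisms `x i`. -/
def wordSpan (x : ι → Module.End S M) (W : Submodule S M) : ℕ → Submodule S M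
  | 0 => W
  | d + 1 => wordSpan x W d ⊔ sumImage x (wordSpan x W d)

variable (x : ι → Module.End S M) {V W : Submodule S M}

theorem mem_sumImage [Fintype ι] {m : M} :
    m ∈ sumImage x V ↔ ∃ t : ι → M, (∀ i, t i ∈ V) ∧ ∑ i, x i (t i) = m := by
  simp only [sumImage, Submodule.mem_iSup_iff_exists_finsupp, Submodule.mem_map]
  constructor
  · rintro ⟨f, hf, rfl⟩
    choose t htV htf using hf
    exact ⟨t, htV, by simp only [htf, Finsupp.sum_fintype f (fun _ m => m) fun _ => rfl]⟩
  · rintro ⟨t, htV, rfl⟩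
    exact ⟨Finsupp.equivFunOnFinite.symm fun i => x i (t i), fun i => ⟨t i, htV i, rfl⟩,
      Finsupp.sum_fintype _ _ fun _ => rfl⟩

theorem apply_mem_sumImage {m : M} (hm : m ∈ V) (i : ι) : x i m ∈ sumImage x V :=
  Submodule.mem_iSup_of_mem i (Submodule.mem_map_of_mem hm)

theorem sumImage_mono : Monotone (sumImage x) := fun _ _ h =>
  iSup_mono fun _ => Submodule.map_mono h

theorem sumImage_iSup {κ : Type*} (U : κ → Submodule S M) :
    sumImage x (⨆ d, U d) = ⨆ d, sumImage x (U d) := by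
  simp only [sumImage, Submodule.map_iSup]
  exact iSup_comm

theorem wordSpan_mono : Monotone (wordSpan x W) :=
  monotone_nat_of_le_succ fun _ => le_sup_left

theorem wordSpan_fg [Finite ι] (hW : W.FG) : ∀ d, (wordSpan x W d).FG
  | 0 => hW
  | d + 1 =>
    have ih := wordSpan_fg hW d
    ih.sup (Submodule.fg_iSup _ fun _ => ih.map _)

theorem wordSpan_le_sup_sumImage (d : ℕ) :
    wordSpan x W d ≤ W ⊔ sumImage x (wordSpan x W d) := by
  cases d with
  | zero => exact le_sup_left
  | succ d =>
    have hmono := sumImage_mono x (wordSpan_mono x (W := W) d.le_succ)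
    exact sup_le ((wordSpan_le_sup_sumImage d).trans (sup_le_sup_left hmono W))
      (hmono.trans le_sup_right)

theorem wordSpan_le_sumImage (hW : W ≤ sumImage x W) (d : ℕ) :
    wordSpan x W d ≤ sumImage x (wordSpan x W d) :=
  (wordSpan_le_sup_sumImage x d).trans <|
    sup_le (hW.trans (sumImage_mono x (wordSpan_mono x d.zero_le))) le_rfl

theorem sumImage_iSup_wordSpan_le :
    sumImage x (⨆ d, wordSpan x W d) ≤ ⨆ d, wordSpan x W d := by
  rw [sumImage_iSup]
  exact iSup_le fun d => le_sup_right.trans (le_iSup (wordSpan x W) (d + 1))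

theorem exists_fg_le_sumImage [Finite ι] (hW : W.FG) (hgen : ⨆ d, wordSpan x W d = ⊤)
    (hx : sumImage x ⊤ = ⊤) : ∃ V : Submodule S M, V.FG ∧ W ≤ V ∧ V ≤ sumImage x V := by
  have hsup : ⨆ d, sumImage x (wordSpan x W d) = ⊤ := by rw [← sumImage_iSup, hgen, hx]
  have hdir : Monotone fun d => sumImage x (wordSpan x W d) :=
    (sumImage_mono x).comp (wordSpan_mono x)
  obtain ⟨_, ⟨d, rfl⟩, hd⟩ := (Submodule.fg_iff_compact W).1 hW _ _ (Set.range_nonempty _)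
    (directedOn_range.2 hdir.directed_le) isLUB_iSup (hsup ▸ le_top)
  exact ⟨wordSpan x W d, wordSpan_fg x hW d, wordSpan_mono x d.zero_le,
    (wordSpan_le_sup_sumImage x d).trans (sup_le hd le_rfl)⟩

variable {x} {y : ι → Module.End S N} {π : N →ₗ[S] M}

theorem disjoint_sumImage_ker [Fintype ι] (hπ : ∀ i u, π (y i u) = x i (π u))
    (hx : Function.Injective fun m : ι → M => ∑ i, x i (m i)) {V : Submodule S N}
    (hV : Disjoint V π.ker) : Disjoint (sumImage y V) π.ker := by
  rw [Submodule.disjoint_def] at hV ⊢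
  rintro _ hu hker
  obtain ⟨t, htV, rfl⟩ := (mem_sumImage y).1 hu
  have hsum : ∑ i, x i (π (t i)) = ∑ i, x i ((0 : ι → M) i) := by
    simpa [hπ] using hker
  have hπt (i : ι) : π (t i) = 0 := congrFun (hx hsum) i
  exact Finset.sum_eq_zero fun i _ => by rw [hV _ (htV i) (hπt i), map_zero]

theorem disjoint_wordSpan_ker [Fintype ι] (hπ : ∀ i u, π (y i u) = x i (π u))
    (hx : Function.Injective fun m : ι → M => ∑ i, x i (m i)) {V : Submodule S N}
    (hVy : V ≤ sumImage y V) (hV : Disjoint V π.ker) : ∀ d, Disjoint (wordSpan y V d) π.ker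
  | 0 => hV
  | d + 1 => by
    rw [wordSpan, sup_eq_right.2 (wordSpan_le_sumImage y hVy d)]
    exact disjoint_sumImage_ker hπ hx (disjoint_wordSpan_ker hπ hx hVy hV d)

end SumImage

theorem bijective_sum_smul_quotient_range {R F ι : Type*} [Ring R] [AddCommGroup F] [Module R F]
    [Fintype ι] (x : ι → R) (A : F →ₗ[R] F)
    (hinj : Function.Injective fun v : ι → F => ∑ i, x i • v i)
    (hA : ∀ v, ∃ t : ι → F, ∑ i, x i • t i = v - A v) :
    Function.Bijective fun m : ι → F ⧸ A.range => ∑ i, x i • m i := by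
  constructor
  · intro m m' hmm
    choose v hv using fun i => A.range.mkQ_surjective (m i - m' i)
    have hsum : A.range.mkQ (∑ i, x i • v i) = 0 := by
      simpa only [map_sum, map_smul, hv, smul_sub, Finset.sum_sub_distrib, sub_eq_zero] using hmm
    obtain ⟨w, hw⟩ := (Submodule.Quotient.mk_eq_zero A.range).1 hsum
    obtain ⟨t, ht⟩ := hA w
    have hw_eq : w = ∑ i, x i • (t i + v i) := by
      simp only [smul_add, Finset.sum_add_distrib, ht, ← hw, sub_add_cancel]
    have hv_eq : (fun i => A (t i + v i)) = v :=
      hinj <| by simpa only [hw_eq, map_sum, map_smul] using hw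
    funext i
    rw [← sub_eq_zero, ← hv i, ← hv_eq]
    exact (Submodule.Quotient.mk_eq_zero _).2 ⟨t i + v i, rfl⟩
  · intro m
    obtain ⟨v, rfl⟩ := A.range.mkQ_surjective m
    obtain ⟨t, ht⟩ := hA v
    refine ⟨fun i => A.range.mkQ (t i), ?_⟩
    have hAv : A.range.mkQ (A v) = 0 := by simp
    simp only [← map_smul, ← map_sum, ht, map_sub, hAv, sub_zero]

theorem bijective_sum_smul_of_equiv {R M N ι : Type*} [Semiring R] [AddCommMonoid M] [Module R M]
    [AddCommMonoid N] [Module R N] [Fintype ι] (x : ι → R) (E : M ≃ₗ[R] N)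
    (hN : Function.Bijective fun m : ι → N => ∑ i, x i • m i) :
    Function.Bijective fun m : ι → M => ∑ i, x i • m i := by
  have hconj : (fun m : ι → M => ∑ i, x i • m i) =
      E.symm ∘ (fun m : ι → N => ∑ i, x i • m i) ∘ fun m i => E (m i) := by
    funext m
    simp [map_sum]
  rw [hconj]
  exact E.symm.bijective.comp (hN.comp (Equiv.piCongrRight fun _ => E.toEquiv).bijective)

theorem linearCombination_mkQ_single {R κ : Type*} [Ring R] [Fintype κ] [DecidableEq κ]
    (p : Submodule R (κ → R)) :
    Fintype.linearCombination R (fun a => p.mkQ (Pi.single a 1)) = p.mkQ :=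
  LinearMap.pi_ext' fun a => LinearMap.ext_ring (by simp)

/-- The free algebra over `S` on non-commuting variables indexed by `ι`, whose scalars commute
with the variables. -/
abbrev FreeAlg (S ι : Type*) [Semiring S] :=
  MonoidAlgebra S (FreeMonoid ι)

namespace FreeAlg

/-- The variable `x_i` of the free algebra. -/
noncomputable def X {S ι : Type*} [Semiring S] (i : ι) : FreeAlg S ι :=
  MonoidAlgebra.of S (FreeMonoid ι) (FreeMonoid.of i)

theorem smul_eq_single_one_mul {S G : Type*} [Semiring S] [Monoid G] (s : S)
    (r : MonoidAlgebra S G) : s • r = MonoidAlgebra.single 1 s * r := by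
  ext g
  simp [MonoidAlgebra.coeff_single_one_mul]

section Semiring

variable {S ι κ M : Type*} [Semiring S] [AddCommMonoid M] [Module (FreeAlg S ι) M] [Module S M]
  [IsScalarTower S (FreeAlg S ι) M]

theorem X_smul_smul_comm (i : ι) (s : S) (m : M) :
    (X i : FreeAlg S ι) • s • m = s • (X i : FreeAlg S ι) • m := by
  have h : (X i : FreeAlg S ι) * (s • 1) = s • X i := by
    simp [X, MonoidAlgebra.one_def]
  rw [← smul_one_smul (FreeAlg S ι) s m, smul_smul, h, smul_assoc]

variable (S ι M) in
/-- Multiplication by the variable `x_i` on a module over the free algebra, as an `S`-linear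
map. -/
noncomputable def lsmulX (i : ι) : Module.End S M where
  toFun m := (X i : FreeAlg S ι) • m
  map_add' := smul_add _
  map_smul' := X_smul_smul_comm i

@[simp]
theorem lsmulX_apply (i : ι) (m : M) : lsmulX S ι M i m = (X i : FreeAlg S ι) • m :=
  rfl

theorem smul_mem_of_sumImage_le {V : Submodule S M} (hV : sumImage (lsmulX S ι M) V ≤ V)
    (r : FreeAlg S ι) {m : M} (hm : m ∈ V) : r • m ∈ V := by
  have hword (w : FreeMonoid ι) : MonoidAlgebra.of S _ w • m ∈ V := by
    induction w using FreeMonoid.inductionOn' with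
    | one => simpa only [map_one, one_smul] using hm
    | of_mul i w ih =>
      rw [map_mul, mul_smul]
      exact hV (apply_mem_sumImage (lsmulX S ι M) ih i)
  induction r using MonoidAlgebra.induction_linear with
  | zero => simp only [zero_smul, zero_mem]
  | add a b ha hb => simpa only [add_smul] using add_mem ha hb
  | single w s =>
    rw [← MonoidAlgebra.smul_of, smul_assoc]
    exact V.smul_mem s (hword w)

theorem eq_top_of_sumImage_le {V : Submodule S M} (hV : sumImage (lsmulX S ι M) V ≤ V)
    (hspan : Submodule.span (FreeAlg S ι) (V : Set M) = ⊤) : V = ⊤ := by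
  let V' : Submodule (FreeAlg S ι) M :=
    { V with smul_mem' := fun r _ hm => smul_mem_of_sumImage_le hV r hm }
  have hV' : ⊤ ≤ V' := hspan ▸ Submodule.span_le.2 subset_rfl
  exact eq_top_iff.2 fun m _ => hV' (x := m) trivial

theorem iSup_wordSpan_eq_top {W : Submodule S M}
    (hW : Submodule.span (FreeAlg S ι) (W : Set M) = ⊤) :
    ⨆ d, wordSpan (lsmulX S ι M) W d = ⊤ :=
  eq_top_of_sumImage_le (sumImage_iSup_wordSpan_le _) <|
    top_unique <| hW ▸ Submodule.span_mono (le_iSup (wordSpan (lsmulX S ι M) W) 0)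

theorem exists_fg_lattice [Fintype ι] [Module.Finite (FreeAlg S ι) M]
    (hsurj : Function.Surjective fun m : ι → M => ∑ i, (X i : FreeAlg S ι) • m i) :
    ∃ V : Submodule S M, V.FG ∧ Submodule.span (FreeAlg S ι) (V : Set M) = ⊤ ∧
      V ≤ sumImage (lsmulX S ι M) V := by
  obtain ⟨G, hG⟩ := Module.Finite.fg_top (R := FreeAlg S ι) (M := M)
  have hspan : Submodule.span (FreeAlg S ι) (Submodule.span S (G : Set M) : Set M) = ⊤ := by
    rw [Submodule.span_span_of_tower, hG]
  have htop : sumImage (lsmulX S ι M) ⊤ = ⊤ :=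
    eq_top_iff.2 fun m _ => (mem_sumImage _).2 <| (hsurj m).imp fun _ ht => ⟨fun _ => trivial, ht⟩
  obtain ⟨V, hfg, hle, hV⟩ := exists_fg_le_sumImage (lsmulX S ι M)
    (Submodule.fg_span G.finite_toSet) (iSup_wordSpan_eq_top hspan) htop
  exact ⟨V, hfg, top_unique (hspan ▸ Submodule.span_mono hle), hV⟩

theorem injective_of_linearIndependent [Fintype ι] {N κ : Type*} [AddCommGroup N]
    [Module (FreeAlg S ι) N] [Module S N] [IsScalarTower S (FreeAlg S ι) N]
    (hinj : Function.Injective fun m : ι → M => ∑ i, (X i : FreeAlg S ι) • m i)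
    {u : κ → N} (hspan : Submodule.span (FreeAlg S ι) (Set.range u) = ⊤)
    (hu : Submodule.span S (Set.range u) ≤
      sumImage (lsmulX S ι N) (Submodule.span S (Set.range u)))
    (π : N →ₗ[FreeAlg S ι] M) (hind : LinearIndependent S (π ∘ u)) :
    Function.Injective π := by
  let V := Submodule.span S (Set.range u)
  have hdisj : ∀ d, Disjoint (wordSpan (lsmulX S ι N) V d) (π.restrictScalars S).ker :=
    disjoint_wordSpan_ker (x := lsmulX S ι M) (fun i v => π.map_smul (X i) v) hinj hu
      (Submodule.range_ker_disjoint hind)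
  have htop : ⨆ d, wordSpan (lsmulX S ι N) V d = ⊤ :=
    iSup_wordSpan_eq_top (by rw [Submodule.span_span_of_tower, hspan])
  refine (injective_iff_map_eq_zero π).2 fun v hv => ?_
  obtain ⟨d, hd⟩ := (Submodule.mem_iSup_of_directed _ (wordSpan_mono _).directed_le).1
    (htop ▸ Submodule.mem_top : v ∈ _)
  exact Submodule.disjoint_def.1 (hdisj d) v hd hv

theorem exists_eq_sum_X_smul [Fintype ι] [Fintype κ] {e : κ → M}
    (he : Submodule.span S (Set.range e) ≤
      sumImage (lsmulX S ι M) (Submodule.span S (Set.range e))) :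
    ∃ D : ι → Matrix κ κ S, ∀ a, e a = ∑ i, (X i : FreeAlg S ι) • ∑ b, D i a b • e b := by
  have hexp (a : κ) : ∃ c : ι → κ → S, e a = ∑ i, (X i : FreeAlg S ι) • ∑ b, c i b • e b := by
    obtain ⟨t, ht, hta⟩ := (mem_sumImage _).1 (he (Submodule.subset_span ⟨a, rfl⟩))
    choose c hc using fun i => (Submodule.mem_span_range_iff_exists_fun S).1 (ht i)
    exact ⟨c, by simp only [hc, ← hta, lsmulX_apply]⟩
  choose c hc using hexp
  exact ⟨fun i => Matrix.of fun a => c a i, hc⟩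

theorem span_le_sumImage [Fintype ι] [Fintype κ] {e : κ → M} (D : ι → Matrix κ κ S)
    (hD : ∀ a, e a = ∑ i, (X i : FreeAlg S ι) • ∑ b, D i a b • e b) :
    Submodule.span S (Set.range e) ≤
      sumImage (lsmulX S ι M) (Submodule.span S (Set.range e)) := by
  rw [Submodule.span_le, Set.range_subset_iff]
  refine fun a => (mem_sumImage _).2 ⟨_, fun i => ?_, (hD a).symm⟩
  exact sum_mem fun b _ => Submodule.smul_mem _ _ (Submodule.subset_span ⟨b, rfl⟩)

theorem coeff_sum_X_mul [Fintype ι] (t : ι → FreeAlg S ι) (i : ι) (w : FreeMonoid ι) :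
    (∑ j, X j * t j).coeff (FreeMonoid.of i * w) = (t i).coeff w := by
  rw [MonoidAlgebra.coeff_sum, Finsupp.finsetSum_apply, Finset.sum_eq_single_of_mem i (by simp)]
  · simp [X]
  · intro j _ hji
    refine MonoidAlgebra.coeff_single_mul_of_forall_mul_ne _ _ fun v hv => hji ?_
    exact (List.cons_eq_cons.1 (congrArg FreeMonoid.toList hv)).1

theorem injective_sum_X_smul_pi [Fintype ι] :
    Function.Injective fun v : ι → κ → FreeAlg S ι => ∑ i, (X i : FreeAlg S ι) • v i := by
  intro u v huv
  ext i a w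
  have hcoeff := congrArg (fun r => (r a).coeff (FreeMonoid.of i * w)) huv
  simpa only [Finset.sum_apply, Pi.smul_apply, smul_eq_mul, coeff_sum_X_mul] using hcoeff

end Semiring

section Augmentation

variable {S : Type*} [Semiring S] {n : ℕ}

theorem freeAlgAug_X (i : Fin n) : freeAlgAug S n (X i) = 0 := by
  simp [freeAlgAug, X, MonoidAlgebra.liftNCRingHom]

theorem freeAlgAug_smul (s : S) (r : FreeAlg S (Fin n)) :
    freeAlgAug S n (s • r) = s * freeAlgAug S n r := by
  rw [← smul_one_mul, map_mul]
  simp [freeAlgAug, MonoidAlgebra.liftNCRingHom, MonoidAlgebra.one_def]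

theorem exists_sum_X_mul_eq {r : FreeAlg S (Fin n)} (hr : freeAlgAug S n r = 0) :
    ∃ t : Fin n → FreeAlg S (Fin n), ∑ i, X i * t i = r := by
  let x := lsmulX S (Fin n) (FreeAlg S (Fin n))
  have htop : Submodule.span S {1} ⊔ sumImage x ⊤ = ⊤ := by
    refine eq_top_of_sumImage_le ((sumImage_mono x le_top).trans le_sup_right) ?_
    refine (Ideal.eq_top_iff_one _).2 (Submodule.subset_span ?_)
    exact Submodule.mem_sup_left (Submodule.mem_span_singleton_self 1)
  obtain ⟨c, hc, z, hz, rfl⟩ := Submodule.mem_sup.1 (htop ▸ Submodule.mem_top : r ∈ _)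
  obtain ⟨s, rfl⟩ := Submodule.mem_span_singleton.1 hc
  obtain ⟨t, -, rfl⟩ := (mem_sumImage x).1 hz
  obtain rfl : s = 0 := by
    simpa [x, freeAlgAug_smul, freeAlgAug_X] using hr
  exact ⟨t, by simp [x]⟩

end Augmentation

section Ring

variable {S ι κ M : Type*} [Ring S] [Fintype ι] [Fintype κ] [DecidableEq κ] [AddCommGroup M]
  [Module (FreeAlg S ι) M] [Module S M] [IsScalarTower S (FreeAlg S ι) M]

/-- The matrix `-∑ i, x_i D_i` over the free algebra attached to matrices `D_i` over `S`. When
`e a = ∑ i, x_i • ∑ b, D_i a b • e b`, the rows of `1 + negPencil D` are the resulting relations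
between the `e a`. -/
noncomputable def negPencil (D : ι → Matrix κ κ S) : Matrix κ κ (FreeAlg S ι) :=
  Matrix.of fun a b => -∑ i, D i a b • X i

theorem linearCombination_row_one_add_negPencil (D : ι → Matrix κ κ S) (e : κ → M) (a : κ) :
    Fintype.linearCombination (FreeAlg S ι) e ((1 + negPencil D).row a) =
      e a - ∑ i, (X i : FreeAlg S ι) • ∑ b, D i a b • e b := by
  have hpencil : ∑ b, (negPencil D a b) • e b =
      -∑ i, (X i : FreeAlg S ι) • ∑ b, D i a b • e b := by
    simp only [negPencil, Matrix.of_apply, neg_smul, Finset.sum_neg_distrib, Finset.sum_smul,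
      smul_assoc, Finset.smul_sum, X_smul_smul_comm]
    rw [Finset.sum_comm]
  simp [Fintype.linearCombination_apply, add_smul, Finset.sum_add_distrib, Matrix.one_apply,
    hpencil, sub_eq_add_neg]

theorem range_one_add_negPencil_le_ker {e : κ → M} {D : ι → Matrix κ κ S}
    (hD : ∀ a, e a = ∑ i, (X i : FreeAlg S ι) • ∑ b, D i a b • e b) :
    LinearMap.range (Matrix.vecMulLinear (1 + negPencil D)) ≤
      (Fintype.linearCombination (FreeAlg S ι) e).ker := by
  refine LinearMap.range_le_ker_iff.2 (LinearMap.pi_ext' fun a => LinearMap.ext_ring ?_)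
  simp only [LinearMap.comp_apply, LinearMap.single_apply, Matrix.vecMulLinear_apply,
    Matrix.single_one_vecMul, linearCombination_row_one_add_negPencil, LinearMap.zero_apply]
  exact sub_eq_zero.2 (hD a)

theorem mkQ_single_eq_sum_X_smul (D : ι → Matrix κ κ S) (a : κ) :
    let u (b : κ) := (LinearMap.range (Matrix.vecMulLinear (1 + negPencil D))).mkQ (Pi.single b 1)
    u a = ∑ i, (X i : FreeAlg S ι) • ∑ b, D i a b • u b := by
  intro u
  let K := LinearMap.range (Matrix.vecMulLinear (1 + negPencil D))
  have hrow : K.mkQ ((1 + negPencil D).row a) = 0 :=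
    (Submodule.Quotient.mk_eq_zero K).2 ⟨Pi.single a 1, Matrix.single_one_vecMul a _⟩
  rw [← linearCombination_mkQ_single, linearCombination_row_one_add_negPencil] at hrow
  exact sub_eq_zero.1 hrow

theorem nonempty_equiv_quotient_of_linearIndependent
    (hinj : Function.Injective fun m : ι → M => ∑ i, (X i : FreeAlg S ι) • m i)
    {e : κ → M} (hspan : Submodule.span (FreeAlg S ι) (Set.range e) = ⊤)
    (hind : LinearIndependent S e) {D : ι → Matrix κ κ S}
    (hD : ∀ a, e a = ∑ i, (X i : FreeAlg S ι) • ∑ b, D i a b • e b) :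
    Nonempty (M ≃ₗ[FreeAlg S ι]
      (κ → FreeAlg S ι) ⧸ LinearMap.range (Matrix.vecMulLinear (1 + negPencil D))) := by
  let K := LinearMap.range (Matrix.vecMulLinear (1 + negPencil D))
  let u (a : κ) : (κ → FreeAlg S ι) ⧸ K := K.mkQ (Pi.single a 1)
  let π := K.liftQ (Fintype.linearCombination (FreeAlg S ι) e) (range_one_add_negPencil_le_ker hD)
  have hπu : π ∘ u = e := by
    funext a
    simp [π, u]
  have hu : Submodule.span (FreeAlg S ι) (Set.range u) = ⊤ := by
    rw [← Fintype.range_linearCombination, linearCombination_mkQ_single, Submodule.range_mkQ]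
  have hπ_inj : Function.Injective π :=
    injective_of_linearIndependent hinj hu (span_le_sumImage D (mkQ_single_eq_sum_X_smul D)) π
      (hπu ▸ hind)
  have hπ_surj : Function.Surjective π := by
    rw [← LinearMap.range_eq_top, Submodule.range_liftQ, Fintype.range_linearCombination, hspan]
  exact ⟨(LinearEquiv.ofBijective π ⟨hπ_inj, hπ_surj⟩).symm⟩

end Ring

theorem exists_equiv_quotient_one_add (S : Type*) [DivisionRing S] {n : ℕ} {M : Type*}
    [AddCommGroup M] [Module (FreeAlg S (Fin n)) M] [Module.Finite (FreeAlg S (Fin n)) M]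
    (hM : Function.Bijective fun m : Fin n → M => ∑ i, (X i : FreeAlg S (Fin n)) • m i) :
    ∃ (l : ℕ) (Q : Matrix (Fin l) (Fin l) (FreeAlg S (Fin n))),
      (∀ i j, Q i j ∈ RingHom.ker (freeAlgAug S n)) ∧
      Nonempty (M ≃ₗ[FreeAlg S (Fin n)]
        (Fin l → FreeAlg S (Fin n)) ⧸ LinearMap.range (Matrix.vecMulLinear (1 + Q))) := by
  let : Module S M :=
    Module.compHom M (MonoidAlgebra.singleOneRingHom : S →+* FreeAlg S (Fin n))
  have : IsScalarTower S (FreeAlg S (Fin n)) M :=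
    ⟨fun s r m => by rw [smul_eq_single_one_mul, mul_smul]; rfl⟩
  obtain ⟨V, hfg, hspan, hV⟩ := exists_fg_lattice (S := S) hM.surjective
  have : Module.Finite S (Submodule.span S (V : Set M)) :=
    Module.Finite.of_fg (V.span_eq.symm ▸ hfg)
  obtain ⟨e, -, he, hind⟩ := Submodule.exists_fun_fin_finrank_span_eq S (V : Set M)
  replace he : Submodule.span S (Set.range e) = V := he.trans V.span_eq
  obtain ⟨D, hD⟩ := exists_eq_sum_X_smul (e := e) (by rwa [he])
  refine ⟨_, negPencil D, fun a b => ?_, ?_⟩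
  · simp [negPencil, freeAlgAug_smul, freeAlgAug_X]
  · exact nonempty_equiv_quotient_of_linearIndependent hM.injective
      (by rw [← Submodule.span_span_of_tower S, he, hspan]) hind hD

theorem bijective_sum_X_smul_quotient_one_add {S : Type*} [Ring S] {n : ℕ} {κ : Type*}
    [Fintype κ] [DecidableEq κ] {Q : Matrix κ κ (FreeAlg S (Fin n))}
    (hQ : ∀ a b, Q a b ∈ RingHom.ker (freeAlgAug S n)) :
    Function.Bijective fun m : Fin n →
        (κ → FreeAlg S (Fin n)) ⧸ LinearMap.range (Matrix.vecMulLinear (1 + Q)) =>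
      ∑ i, (X i : FreeAlg S (Fin n)) • m i := by
  refine bijective_sum_smul_quotient_range _ _ injective_sum_X_smul_pi fun v => ?_
  have haug (a : κ) : freeAlgAug S n (-(Matrix.vecMul v Q a)) = 0 := by
    simp [Matrix.vecMul, dotProduct, (RingHom.mem_ker).1 (hQ _ _)]
  choose t ht using fun a => exists_sum_X_mul_eq (haug a)
  refine ⟨fun i a => t a i, funext fun a => ?_⟩
  simp [ht]

end FreeAlg

open FreeAlg in
theorem stmt7_general (S : Type*) [DivisionRing S] (n : ℕ)
    (M : Type*) [AddCommGroup M] [Module (FreeAlg S (Fin n)) M] :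
    List.TFAE
      [(∃ (p q : ℕ) (f : (Fin p → FreeAlg S (Fin n)) →ₗ[FreeAlg S (Fin n)]
            (Fin q → FreeAlg S (Fin n)))
          (g : (Fin q → FreeAlg S (Fin n)) →ₗ[FreeAlg S (Fin n)] M),
          Function.Surjective g ∧ LinearMap.ker g = LinearMap.range f) ∧
        Function.Bijective fun m : Fin n → M => ∑ i, (X i : FreeAlg S (Fin n)) • m i,
      Module.Finite (FreeAlg S (Fin n)) M ∧
        Function.Bijective fun m : Fin n → M => ∑ i, (X i : FreeAlg S (Fin n)) • m i,
      ∃ (l : ℕ) (Q : Matrix (Fin l) (Fin l) (FreeAlg S (Fin n))),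
        (∀ i j, Q i j ∈ RingHom.ker (freeAlgAug S n)) ∧
        Nonempty (M ≃ₗ[FreeAlg S (Fin n)]
          (Fin l → FreeAlg S (Fin n)) ⧸ LinearMap.range (Matrix.vecMulLinear (1 + Q)))] := by
  tfae_have 1 → 2 := fun ⟨⟨_, _, _, g, hg, _⟩, hM⟩ => ⟨Module.Finite.of_surjective g hg, hM⟩
  tfae_have 2 → 3 := fun ⟨_, hM⟩ => exists_equiv_quotient_one_add S hM
  tfae_have 3 → 1 := by
    rintro ⟨l, Q, hQ, ⟨E⟩⟩
    refine ⟨⟨l, l, Matrix.vecMulLinear (1 + Q), E.symm.toLinearMap ∘ₗ Submodule.mkQ _,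
      E.symm.surjective.comp (Submodule.mkQ_surjective _), ?_⟩, ?_⟩
    · rw [LinearEquiv.ker_comp, Submodule.ker_mkQ]
    · exact bijective_sum_smul_of_equiv _ E (bijective_sum_X_smul_quotient_one_add hQ)
  tfae_finish

theorem stmt7 (S : Type*) [DivisionRing S] (n : ℕ) (hn : 1 ≤ n)
    (M : Type*) [AddCommGroup M]
    [Module (MonoidAlgebra S (FreeMonoid (Fin n))) M] :
    ((∃ (p q : ℕ)
        (f : (Fin p → MonoidAlgebra S (FreeMonoid (Fin n))) →ₗ[MonoidAlgebra S (FreeMonoid (Fin n))]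
          (Fin q → MonoidAlgebra S (FreeMonoid (Fin n))))
        (g : (Fin q → MonoidAlgebra S (FreeMonoid (Fin n))) →ₗ[MonoidAlgebra S (FreeMonoid (Fin n))] M),
        Function.Surjective g ∧ LinearMap.ker g = LinearMap.range f) ∧
      Function.Bijective (fun m : Fin n → M =>
        ∑ i : Fin n,
          (MonoidAlgebra.of S (FreeMonoid (Fin n)) (FreeMonoid.of i)) • m i))
    ↔
    ∃ (l : ℕ) (Q : Matrix (Fin l) (Fin l) (MonoidAlgebra S (FreeMonoid (Fin n)))),
      (∀ i j, Q i j ∈ RingHom.ker (freeAlgAug S n)) ∧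
      Nonempty (M ≃ₗ[MonoidAlgebra S (FreeMonoid (Fin n))]
        ((Fin l → MonoidAlgebra S (FreeMonoid (Fin n))) ⧸
          LinearMap.range (Matrix.vecMulLinear (1 + Q)))) := by
  exact (stmt7_general S n M).out 0 2
end

section
/- Let k be a field, n ≥ 1, F the free group on generators t_1, …, t_n, and Λ = MonoidAlgebra k F. Let s ∈ F be a reduced word of length 1 (i.e., s = t_i or s = t_i^{-1} for some i), and let a, b ∈ k with a ≠ 0, b ≠ 0 and a + b = 1. Then the special comonic polynomial γ = a·1 + b·s of length 1 is irreducible in Λ: γ is not a unit of Λ, and whenever γ = α·β with α, β ∈ Λ, either α is a unit or β is a unit. -/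
/-!
Suppose `G` carries a left-invariant linear order in which `s` is the immediate successor of `1`.
In a product `α * β` the largest and the smallest product of supports `x * w` are attained only
once, so they survive in `α * β`. If `α * β = a + b s`, every product `x * w` therefore lies in
`[1, s] = {1, s}`; if `w < w'` both occur in `β`, then `x * w < x * w'` forces `x = w⁻¹`, so
`α` is a monomial.

The free group has such an order for each generator `t`. Let it act through the Magnus
representation `t_i ↦ 1 + X_i` on the power series in noncommuting variables with `X_i² = 0`, taken
modulo the left ideal generated by `X_t`. The action preserves the lexicographic order on
coefficients, and the stabilizer of the series `1` is the cyclic group `⟨t⟩`. Compare first the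
images of the series `1`, then the exponent sums.
-/

section LeftOrderedGroup

variable {k G : Type*} [Group G] [LinearOrder G] [MulLeftMono G]

theorem mul_le_of_support_mul_le [Semiring k] [NoZeroDivisors k] {α β : MonoidAlgebra k G} {u : G}
    (h : ∀ g ∈ (α * β).coeff.support, g ≤ u) {x w : G} (hx : x ∈ α.coeff.support)
    (hw : w ∈ β.coeff.support) : x * w ≤ u := by
  obtain ⟨w₀, hw₀, hw₀_max⟩ := β.coeff.support.exists_max_image id ⟨w, hw⟩
  obtain ⟨x₀, hx₀, hx₀_max⟩ := α.coeff.support.exists_max_image (· * w₀) ⟨x, hx⟩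
  have unique : UniqueMul α.coeff.support β.coeff.support x₀ w₀ := by
    intro y z hy hz hyz
    have hz_eq : z = w₀ :=
      (hw₀_max z hz).antisymm <| le_of_mul_le_mul_left' <| (hx₀_max y hy).trans hyz.ge
    exact ⟨mul_right_cancel (hz_eq ▸ hyz), hz_eq⟩
  have survives : x₀ * w₀ ∈ (α * β).coeff.support := by
    rw [Finsupp.mem_support_iff, MonoidAlgebra.coeff_mul_mul_of_uniqueMul unique]
    exact mul_ne_zero (Finsupp.mem_support_iff.1 hx₀) (Finsupp.mem_support_iff.1 hw₀)
  calc x * w ≤ x * w₀ := mul_le_mul_right (hw₀_max w hw) x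
    _ ≤ x₀ * w₀ := hx₀_max x hx
    _ ≤ u := h _ survives

theorem mul_mem_Icc_of_support_mul_subset [Semiring k] [NoZeroDivisors k] {α β : MonoidAlgebra k G}
    {l u : G} (h : ∀ g ∈ (α * β).coeff.support, g ∈ Set.Icc l u) {x w : G}
    (hx : x ∈ α.coeff.support) (hw : w ∈ β.coeff.support) : x * w ∈ Set.Icc l u :=
  ⟨mul_le_of_support_mul_le (G := Gᵒᵈ) (fun g hg ↦ (h g hg).1) hx hw,
    mul_le_of_support_mul_le (fun g hg ↦ (h g hg).2) hx hw⟩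

theorem subsingleton_support_or_of_support_mul_subset_Icc [Semiring k] [NoZeroDivisors k]
    {α β : MonoidAlgebra k G} {l u : G} (hlu : l ⋖ u)
    (h : ∀ g ∈ (α * β).coeff.support, g ∈ Set.Icc l u) :
    (α.coeff.support : Set G).Subsingleton ∨ (β.coeff.support : Set G).Subsingleton := by
  rw [or_iff_not_imp_right, Set.not_subsingleton_iff]
  intro hβ
  obtain ⟨w, hw, w', hw', hlt⟩ := hβ.exists_lt
  have eq_mul_inv : ∀ x ∈ α.coeff.support, x = l * w⁻¹ := fun x hx ↦ by
    have hxw := mul_mem_Icc_of_support_mul_subset h hx hw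
    have hxw' := mul_mem_Icc_of_support_mul_subset h hx hw'
    have hxw_lt : x * w < u := (mul_lt_mul_right hlt x).trans_le hxw'.2
    exact eq_mul_inv_of_mul_eq ((hlu.eq_or_eq hxw.1 hxw.2).resolve_right hxw_lt.ne)
  exact fun x hx y hy ↦ (eq_mul_inv x hx).trans (eq_mul_inv y hy).symm

end LeftOrderedGroup

theorem isUnit_of_subsingleton_support {k G : Type*} [DivisionSemiring k] [Group G]
    {α : MonoidAlgebra k G} (hα : α ≠ 0) (h : (α.coeff.support : Set G).Subsingleton) :
    IsUnit α := by
  obtain ⟨g, hg⟩ : α.coeff.support.Nonempty := by simpa using hα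
  obtain ⟨c, hc, hαc⟩ := Finsupp.support_eq_singleton'.1
    (Finset.coe_eq_singleton.1 (h.eq_singleton_of_mem hg))
  obtain rfl : α = .single g c := MonoidAlgebra.coeff_injective hαc
  exact ⟨⟨.single g c, .single g⁻¹ c⁻¹, by simp [hc, MonoidAlgebra.one_def],
    by simp [hc, MonoidAlgebra.one_def]⟩, rfl⟩

theorem coeff_support_smul_one_add_smul_of {k G : Type*} [Semiring k] [MulOneClass G]
    [DecidableEq G] {s : G} (hs : s ≠ 1) {a b : k} (ha : a ≠ 0) (hb : b ≠ 0) :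
    (a • (1 : MonoidAlgebra k G) + b • MonoidAlgebra.of k G s).coeff.support = {1, s} := by
  ext g
  by_cases hg : g = 1 <;> by_cases hgs : g = s <;>
    simp_all [MonoidAlgebra.one_def, Finsupp.single_apply, eq_comm]

theorem irreducible_smul_one_add_smul_of {k G : Type*} [DivisionSemiring k] [Group G]
    [LinearOrder G] [MulLeftMono G] {s : G} (hs : 1 ⋖ s) {a b : k} (ha : a ≠ 0) (hb : b ≠ 0) :
    Irreducible (a • (1 : MonoidAlgebra k G) + b • MonoidAlgebra.of k G s) := by
  have support_eq := coeff_support_smul_one_add_smul_of hs.ne' ha hb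
  set γ := a • (1 : MonoidAlgebra k G) + b • MonoidAlgebra.of k G s
  have hγ : γ ≠ 0 := by
    rw [← MonoidAlgebra.coeff_eq_zero.ne, ← Finsupp.support_nonempty_iff, support_eq]
    exact Finset.insert_nonempty 1 {s}
  refine ⟨fun hunit ↦ ?_, fun α β hαβ ↦ ?_⟩
  · obtain ⟨δ, hδ⟩ := hunit.exists_right_inv
    obtain ⟨w, hw⟩ : δ.coeff.support.Nonempty := by
      simpa using right_ne_zero_of_mul_eq_one hδ
    have mul_eq_one : ∀ x ∈ γ.coeff.support, x * w = 1 := fun x hx ↦ by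
      have hxw := mul_mem_Icc_of_support_mul_subset (l := 1) (u := 1)
        (by simp [hδ, MonoidAlgebra.one_def]) hx hw
      simpa using hxw
    have h1 : 1 * w = 1 := mul_eq_one 1 (by simp [support_eq])
    have hsw : s * w = 1 := mul_eq_one s (by simp [support_eq])
    exact hs.ne (mul_right_cancel (h1.trans hsw.symm))
  · rw [hαβ] at support_eq hγ
    have support_le : ∀ g ∈ (α * β).coeff.support, g ∈ Set.Icc 1 s := fun g hg ↦ by
      simpa [hs.Icc_eq, support_eq] using hg
    exact (subsingleton_support_or_of_support_mul_subset_Icc hs support_le).imp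
      (isUnit_of_subsingleton_support (left_ne_zero_of_mul hγ))
      (isUnit_of_subsingleton_support (right_ne_zero_of_mul hγ))

theorem exists_linearOrder_one_covBy {G X C : Type*} [Group G] [LinearOrder X] [Group C]
    [LinearOrder C] [MulLeftMono C] {f : G → X}
    (hf : ∀ x g h : G, f g < f h → f (x * g) < f (x * h)) (c : G →* C)
    (hinj : Function.Injective fun g ↦ (f g, c g)) {s : G} (hfs : f s = f 1)
    (hcs : 1 ⋖ c s) :
    ∃ _ : LinearOrder G, MulLeftMono G ∧ 1 ⋖ s := by
  have lt_iff (x g h : G) : f (x * g) < f (x * h) ↔ f g < f h :=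
    ⟨fun hlt ↦ by simpa using hf x⁻¹ _ _ hlt, hf x g h⟩
  have eq_iff (x g h : G) : f (x * g) = f (x * h) ↔ f g = f h := by
    simp only [le_antisymm_iff, ← not_lt, lt_iff]
  let key (g : G) : X ×ₗ C := toLex (f g, c g)
  have key_injective : Function.Injective key := toLex.injective.comp hinj
  let : LinearOrder G := LinearOrder.lift' key key_injective
  let keyEmbedding : G ↪o X ×ₗ C :=
    { toFun := key, inj' := key_injective, map_rel_iff' := Iff.rfl }
  have le_def (g h : G) : g ≤ h ↔ f g < f h ∨ f g = f h ∧ c g ≤ c h := Prod.Lex.toLex_le_toLex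
  refine ⟨inferInstance, ⟨fun x g h hgh ↦ ?_⟩, CovBy.of_image keyEmbedding ?_⟩
  · simpa only [le_def, lt_iff, eq_iff, map_mul, mul_le_mul_iff_left] using hgh
  · refine Prod.Lex.toLex_covBy_toLex_iff.2 (.inl ⟨hfs.symm, ?_⟩)
    rwa [map_one]

theorem toLex_add_lt_toLex_add {W R : Type*} [Preorder W] [Add R] [LT R] [AddRightStrictMono R]
    {N : (W → R) → W → R} (hN : ∀ v v' w, (∀ u < w, v u = v' u) → N v w = N v' w) {v v' : W → R}
    (h : toLex v < toLex v') : toLex (v + N v) < toLex (v' + N v') := by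
  obtain ⟨w, heq, hlt⟩ := h
  refine ⟨w, fun u hu ↦ ?_, ?_⟩
  · exact congrArg₂ (· + ·) (heq u hu) (hN v v' u fun u' hu' ↦ heq u' (hu'.trans hu))
  · change v w + N v w < v' w + N v' w
    rw [hN v v' w heq]
    exact add_lt_add_left hlt _

/-- The one-parameter group `m ↦ 1 + m N` of automorphisms of `M` generated by an endomorphism `N`
with `N² = 0`. -/
def unipotent {M : Type*} [AddCommGroup M] (N : M →+ M) (hN : ∀ v, N (N v) = 0) :
    Multiplicative ℤ →* Equiv.Perm M :=
  MonoidHom.toHomPerm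
    { toFun m v := v + m.toAdd • N v
      map_one' := funext fun v ↦ by
        change v + (0 : ℤ) • N v = v
        rw [zero_smul, add_zero]
      map_mul' m m' := funext fun v ↦ by
        change v + (m.toAdd + m'.toAdd) • N v =
          v + m'.toAdd • N v + m.toAdd • N (v + m'.toAdd • N v)
        rw [map_add, map_zsmul, hN, smul_zero, add_zero, add_smul, add_comm (m.toAdd • N v),
          add_assoc] }

theorem unipotent_apply {M : Type*} [AddCommGroup M] (N : M →+ M) (hN : ∀ v, N (N v) = 0)
    (m : ℤ) (v : M) : unipotent N hN (.ofAdd m) v = v + m • N v :=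
  rfl

section SyllableForm

variable {ι : Type*}

/-- `SyllableForm t g [i₁, …, iᵣ]` states that `g = t_{i₁}^{m₁} ⋯ t_{iᵣ}^{mᵣ} t^m` with nonzero
exponents `m₁, …, mᵣ`, where adjacent generators, including the last pair `iᵣ, t`, are distinct. -/
inductive SyllableForm (t : ι) : FreeGroup ι → List ι → Prop
  | nil (m : ℤ) : SyllableForm t (FreeGroup.of t ^ m) []
  | cons {g : FreeGroup ι} {w : List ι} {i : ι} {m : ℤ} (hw : SyllableForm t g w)
      (hi : w.headD t ≠ i) (hm : m ≠ 0) : SyllableForm t (FreeGroup.of i ^ m * g) (i :: w)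

theorem SyllableForm.exists_zpow_mul {t : ι} {g : FreeGroup ι} {w : List ι}
    (h : SyllableForm t g w) (i : ι) (m : ℤ) :
    ∃ w', SyllableForm t (FreeGroup.of i ^ m * g) w' := by
  obtain rfl | hm := eq_or_ne m 0
  · exact ⟨w, by simpa using h⟩
  obtain hi | rfl := ne_or_eq (w.headD t) i
  · exact ⟨_, h.cons hi hm⟩
  cases h with
  | nil m' => exact ⟨[], by simpa [← zpow_add] using nil (m + m')⟩
  | @cons g w j m' hw hj hm' =>
    rw [List.headD_cons, ← mul_assoc, ← zpow_add]
    obtain hmm | hmm := eq_or_ne (m + m') 0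
    · exact ⟨w, by simpa [hmm] using hw⟩
    · exact ⟨_, hw.cons hj hmm⟩

theorem exists_syllableForm (t : ι) (g : FreeGroup ι) : ∃ w, SyllableForm t g w := by
  have hg : g ∈ Subgroup.closure (Set.range (FreeGroup.of (α := ι))) := by
    simp [FreeGroup.closure_range_of]
  induction hg using Subgroup.closure_induction_left with
  | one => exact ⟨[], by simpa using SyllableForm.nil (t := t) 0⟩
  | mul_left _ hx _ _ ih =>
    obtain ⟨i, rfl⟩ := hx
    obtain ⟨w, hw⟩ := ih
    simpa using hw.exists_zpow_mul i 1
  | inv_mul_cancel _ hx _ _ ih =>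
    obtain ⟨i, rfl⟩ := hx
    obtain ⟨w, hw⟩ := ih
    simpa using hw.exists_zpow_mul i (-1)

end SyllableForm

section Magnus

variable {ι : Type*} [DecidableEq ι]

/-- Left multiplication by `X_i` in the Magnus module of `t`: the power series with integer
coefficients in noncommuting variables `X_j` with `X_j² = 0`, modulo the left ideal generated by
`X_t`. The value of `v` at a list `[j₁, …, jᵣ]` is the coefficient of `X_{j₁} ⋯ X_{jᵣ}`; the default
head `t` of the empty list accounts for the left ideal. Lists with two equal neighbours or with last
entry `t` represent no monomial, and `v` may take arbitrary values there. -/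
def magnusVar (t i : ι) : (List ι → ℤ) →+ (List ι → ℤ) where
  toFun v
    | [] => 0
    | j :: w => if j = i ∧ w.headD t ≠ i then v w else 0
  map_zero' := by ext (_ | _) <;> simp
  map_add' v v' := by
    ext (_ | ⟨j, w⟩)
    · simp
    · simp only [Pi.add_apply]
      split_ifs <;> simp

theorem magnusVar_nil (t i : ι) (v : List ι → ℤ) : magnusVar t i v [] = 0 :=
  rfl

theorem magnusVar_cons (t i j : ι) (v : List ι → ℤ) (w : List ι) :
    magnusVar t i v (j :: w) = if j = i ∧ w.headD t ≠ i then v w else 0 :=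
  rfl

theorem magnusVar_magnusVar (t i : ι) (v : List ι → ℤ) : magnusVar t i (magnusVar t i v) = 0 := by
  ext (_ | ⟨j, _ | ⟨j', w⟩⟩) <;> simp +contextual [magnusVar_nil, magnusVar_cons]

theorem magnusVar_congr [Preorder (List ι)] (hlt : ∀ (i : ι) (w : List ι), w < i :: w) (t i : ι)
    (v v' : List ι → ℤ) (w : List ι) (h : ∀ u < w, v u = v' u) :
    magnusVar t i v w = magnusVar t i v' w := by
  cases w with
  | nil => rfl
  | cons j w => simp only [magnusVar_cons, h w (hlt j w)]

/-- The action of the free group on the Magnus module of `t` in which the generator `i` acts as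
multiplication by `1 + X_i`. -/
def magnusAction (t : ι) : FreeGroup ι →* Equiv.Perm (List ι → ℤ) :=
  FreeGroup.lift fun i ↦ unipotent (magnusVar t i) (magnusVar_magnusVar t i) (.ofAdd 1)

theorem magnusAction_of_zpow (t i : ι) (m : ℤ) (v : List ι → ℤ) :
    magnusAction t (FreeGroup.of i ^ m) v = v + m • magnusVar t i v := by
  rw [map_zpow, magnusAction, FreeGroup.lift_apply_of, ← map_zpow, ← Int.ofAdd_mul, one_mul,
    unipotent_apply]

theorem magnusAction_lt [Preorder (List ι)] (hlt : ∀ (i : ι) (w : List ι), w < i :: w) (t : ι)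
    (g : FreeGroup ι) {v v' : List ι → ℤ} (h : toLex v < toLex v') :
    toLex (magnusAction t g v) < toLex (magnusAction t g v') := by
  have zpow_lt (i : ι) (m : ℤ) {v v' : List ι → ℤ} (h : toLex v < toLex v') :
      toLex (magnusAction t (FreeGroup.of i ^ m) v) <
        toLex (magnusAction t (FreeGroup.of i ^ m) v') := by
    simp only [magnusAction_of_zpow]
    refine toLex_add_lt_toLex_add (N := fun v ↦ m • magnusVar t i v) (fun v v' w hw ↦ ?_) h
    simp [magnusVar_congr hlt t i v v' w hw]
  induction g using FreeGroup.induction_on generalizing v v' with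
  | C1 => simpa using h
  | of i => simpa using zpow_lt i 1 h
  | inv_of i _ => simpa using zpow_lt i (-1) h
  | mul g g' ihg ihg' => simpa using ihg (ihg' h)

theorem magnusAction_of_zpow_single_nil (t : ι) (m : ℤ) :
    magnusAction t (FreeGroup.of t ^ m) (Pi.single [] 1) = Pi.single [] 1 := by
  rw [magnusAction_of_zpow]
  ext (_ | ⟨j, _ | ⟨j', w⟩⟩) <;> simp [magnusVar_nil, magnusVar_cons]

theorem SyllableForm.magnusAction_apply {t : ι} {g : FreeGroup ι} {w : List ι}
    (h : SyllableForm t g w) :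
    magnusAction t g (Pi.single [] 1) w ≠ 0 ∧
      ∀ u : List ι, w.length < u.length → magnusAction t g (Pi.single [] 1) u = 0 := by
  induction h with
  | nil m =>
    rw [magnusAction_of_zpow_single_nil]
    refine ⟨by simp, fun u hu ↦ Pi.single_eq_of_ne (List.length_pos_iff.1 hu) 1⟩
  | @cons g w i m hw hi hm ih =>
    rw [map_mul, Equiv.Perm.mul_apply, magnusAction_of_zpow]
    refine ⟨?_, fun u hu ↦ ?_⟩
    · have leading_eq_zero := ih.2 (i :: w) (by simp)
      simpa [leading_eq_zero, magnusVar_cons, hm, hi, -List.headD_eq_head?_getD] using ih.1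
    · obtain _ | ⟨j, u⟩ := u
      · simp at hu
      · simp_all [magnusVar_cons, ih.2 _ (Nat.lt_of_succ_lt hu)]

theorem mem_zpowers_of_magnusAction_eq {t : ι} {g : FreeGroup ι}
    (hg : magnusAction t g (Pi.single [] 1) = Pi.single [] 1) :
    g ∈ Subgroup.zpowers (FreeGroup.of t) := by
  obtain ⟨w, hw⟩ := exists_syllableForm t g
  have coeff_ne_zero := hw.magnusAction_apply.1
  rw [hg] at coeff_ne_zero
  cases hw with
  | nil m => exact ⟨m, rfl⟩
  | cons => simp at coeff_ne_zero

end Magnus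

theorem exists_linearOrder_one_covBy_of_zpow {ι : Type*} (t : ι) (ε : ℤˣ) :
    ∃ _ : LinearOrder (FreeGroup ι), MulLeftMono (FreeGroup ι) ∧
      1 ⋖ FreeGroup.of t ^ (ε : ℤ) := by
  classical
  let c : FreeGroup ι →* Multiplicative ℤ := FreeGroup.lift fun _ ↦ .ofAdd (ε : ℤ)
  have c_zpow (m : ℤ) : c (FreeGroup.of t ^ m) = .ofAdd (ε * m : ℤ) := by
    simp [c, ← Int.ofAdd_mul]
  let : LinearOrder (List ι) := IsWellFounded.wellOrderExtension (InvImage (· < ·) List.length)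
  have lt_cons (i : ι) (w : List ι) : w < i :: w :=
    Prod.Lex.left _ _ (IsWellFounded.rank_lt_of_rel (Nat.lt_succ_self w.length))
  let f (g : FreeGroup ι) := toLex (magnusAction t g (Pi.single [] 1))
  refine exists_linearOrder_one_covBy (f := f) (fun x g h hgh ↦ ?_) c
    (fun g h hgh ↦ ?_) (congrArg toLex ?_) ?_
  · simp only [f, map_mul, Equiv.Perm.mul_apply]
    exact magnusAction_lt lt_cons t x hgh
  · obtain ⟨hf, hc⟩ := Prod.ext_iff.1 hgh
    have fixes_one : magnusAction t (g⁻¹ * h) (Pi.single [] 1) = Pi.single [] 1 := by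
      rw [map_mul, map_inv, Equiv.Perm.mul_apply, Equiv.Perm.inv_eq_iff_eq]
      exact (toLex.injective hf).symm
    obtain ⟨m, hm⟩ := Subgroup.mem_zpowers_iff.1 (mem_zpowers_of_magnusAction_eq fixes_one)
    have hεm : (.ofAdd (ε * m) : Multiplicative ℤ) = .ofAdd 0 := by
      rw [← c_zpow, hm, map_mul, map_inv, inv_mul_eq_one.2 hc, ofAdd_zero]
    obtain rfl : m = 0 := by simpa using hεm
    exact inv_mul_eq_one.1 (by rw [← hm, zpow_zero])
  · rw [magnusAction_of_zpow_single_nil, map_one, Equiv.Perm.one_apply]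
  · rw [c_zpow, Int.units_coe_mul_self]
    exact Order.covBy_add_one (0 : ℤ)

theorem stmt12_general {k ι : Type*} [DivisionSemiring k] [DecidableEq ι] (s : FreeGroup ι)
    (hs : (FreeGroup.toWord s).length = 1) (a b : k) (ha : a ≠ 0) (hb : b ≠ 0) :
    Irreducible
      (a • (1 : MonoidAlgebra k (FreeGroup ι)) + b • MonoidAlgebra.of k (FreeGroup ι) s) := by
  obtain ⟨t, ε, rfl⟩ : ∃ (t : ι) (ε : ℤˣ), s = FreeGroup.of t ^ (ε : ℤ) := by
    obtain ⟨⟨t, e⟩, hte⟩ := List.length_eq_one_iff.1 hs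
    rw [← FreeGroup.mk_toWord (x := s), hte]
    cases e
    · exact ⟨t, -1, by simp [FreeGroup.of, FreeGroup.invRev]⟩
    · exact ⟨t, 1, by simp [FreeGroup.of]⟩
  obtain ⟨_, _, hcov⟩ := exists_linearOrder_one_covBy_of_zpow t ε
  exact irreducible_smul_one_add_smul_of hcov ha hb

/-- For a field `k`, a reduced word `s` of length `1` in the free group, and nonzero scalars
`a, b ∈ k` with `a + b = 1`, the special comonic polynomial `a•1 + b•s` of length `1` is
irreducible in the group algebra of the free group. -/
theorem stmt12 (k : Type*) [Field k] (n : ℕ) (hn : 1 ≤ n)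
    (s : FreeGroup (Fin n)) (hs : (FreeGroup.toWord s).length = 1)
    (a b : k) (ha : a ≠ 0) (hb : b ≠ 0) (hab : a + b = 1) :
    Irreducible
      (a • (1 : MonoidAlgebra k (FreeGroup (Fin n)))
        + b • (MonoidAlgebra.of k (FreeGroup (Fin n)) s
            : MonoidAlgebra k (FreeGroup (Fin n)))) :=
  stmt12_general s hs a b ha hb
end
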